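/- Let k be a field, n a positive natural number, and R = k[[X_0,…,X_{n−1}]] the ring of formal power series in n variables over k. Let a, b : Fin n → ℕ both be nonzero. Then the radical of the ideal (X^a, X^b) of R equals the intersection, over all pairs of indices (i, j) with a_i > 0 and b_j > 0, of the ideals (X_i, X_j). -/

import Mathlib

/-!
Both sides of the identity are radical ideals, so it suffices to compare the primes containing them.
A prime contains a monomial exactly when it contains one of the variables occurring in it, so
`(X^a, X^b)` and the ideals `(X_i, X_j)` with `a_i, b_j > 0` cut out the same primes. That the
ideals `(X_i, X_j)` are radical is seen by setting variables to zero: `(X_i : i ∈ s)` is the kernel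
of this substitution, whose target, a power series ring over a reduced ring, is itself reduced.
-/

section Ideal

variable {A ι κ : Type*} [CommSemiring A]

theorem radical_prod_sup_prod (s : Finset ι) (t : Finset κ) (I : ι → Ideal A) (J : κ → Ideal A) :
    ((∏ i ∈ s, I i) ⊔ ∏ j ∈ t, J j).radical = ⨅ i ∈ s, ⨅ j ∈ t, (I i ⊔ J j).radical := by
  apply le_antisymm
  · refine le_iInf₂ fun i hi => le_iInf₂ fun j hj => Ideal.radical_mono (sup_le_sup ?_ ?_)
    · exact Ideal.prod_le_inf.trans (Finset.inf_le hi)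
    · exact Ideal.prod_le_inf.trans (Finset.inf_le hj)
  · rw [Ideal.radical_eq_sInf ((∏ i ∈ s, I i) ⊔ _)]
    refine le_sInf fun P ⟨hle, hP⟩ => ?_
    obtain ⟨i, hi, hiP⟩ := hP.prod_le.1 (le_sup_left.trans hle)
    obtain ⟨j, hj, hjP⟩ := hP.prod_le.1 (le_sup_right.trans hle)
    calc ⨅ i ∈ s, ⨅ j ∈ t, (I i ⊔ J j).radical
        ≤ (I i ⊔ J j).radical := (iInf₂_le i hi).trans (iInf₂_le j hj)
      _ ≤ P := hP.radical_le_iff.2 (sup_le hiP hjP)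

theorem radical_pow_sup_pow (I J : Ideal A) {m n : ℕ} (hm : m ≠ 0) (hn : n ≠ 0) :
    (I ^ m ⊔ J ^ n).radical = (I ⊔ J).radical := by
  rw [Ideal.radical_sup, Ideal.radical_pow _ hm, Ideal.radical_pow _ hn, ← Ideal.radical_sup]

theorem radical_span_finsuppProd_pair (x : ι → A) (y : κ → A) (a : ι →₀ ℕ) (b : κ →₀ ℕ) :
    (Ideal.span {a.prod fun i m => x i ^ m, b.prod fun j m => y j ^ m}).radical =
      ⨅ i ∈ a.support, ⨅ j ∈ b.support, (Ideal.span {x i, y j}).radical := by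
  simp only [Ideal.span_insert, Finsupp.prod, ← Ideal.prod_span_singleton,
    ← Ideal.span_singleton_pow, radical_prod_sup_prod]
  refine biInf_congr fun i hi => biInf_congr fun j hj => ?_
  exact radical_pow_sup_pow _ _ (Finsupp.mem_support_iff.1 hi) (Finsupp.mem_support_iff.1 hj)

end Ideal

section MvPowerSeries

open MvPowerSeries

variable {σ R : Type*} [CommRing R]

instance isReduced_mvPowerSeries [IsReduced R] : IsReduced (MvPowerSeries σ R) where
  eq_zero f hf := by
    ext m
    refine (nilpotent_iff_mem_prime.2 fun P hP => ?_ : IsNilpotent (coeff m f)).eq_zero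
    have map_eq_zero : map (Ideal.Quotient.mk P) f = 0 := (hf.map _).eq_zero
    rw [← Ideal.Quotient.eq_zero_iff_mem, ← coeff_map, map_eq_zero, map_zero]

theorem mem_ker_killCompl_iff {s : Set σ} {f : MvPowerSeries σ R} :
    f ∈ RingHom.ker (killCompl (R := R) (Function.Embedding.subtype (· ∉ s))) ↔
      ∀ m : σ →₀ ℕ, (∀ i ∈ s, m i = 0) → coeff m f = 0 := by
  have mem_range_iff (m : σ →₀ ℕ) :
      m ∈ Set.range (Finsupp.embDomain (Function.Embedding.subtype (· ∉ s))) ↔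
        ∀ i ∈ s, m i = 0 := by
    rw [Finsupp.mem_range_embDomain_iff]
    simp [Set.subset_def, not_imp_comm]
  simp only [RingHom.mem_ker, MvPowerSeries.ext_iff, coeff_killCompl, map_zero, ← mem_range_iff,
    Set.forall_mem_range]

theorem mem_span_X_image_of_coeff_eq_zero {s : Finset σ} {f : MvPowerSeries σ R}
    (hf : ∀ m : σ →₀ ℕ, (∀ i ∈ s, m i = 0) → coeff m f = 0) :
    f ∈ Ideal.span (X '' (s : Set σ)) := by
  classical
  induction s using Finset.induction_on generalizing f with
  | empty =>
    obtain rfl : f = 0 := MvPowerSeries.ext fun m => hf m (by simp)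
    exact zero_mem _
  | insert i s _ ih =>
    let g : MvPowerSeries σ R := fun m => if m i = 0 then coeff m f else 0
    have coeff_g (m : σ →₀ ℕ) : coeff m g = if m i = 0 then coeff m f else 0 := rfl
    have g_mem : g ∈ Ideal.span (X '' (s : Set σ)) := ih fun m hm => by
      rw [coeff_g]
      split_ifs with hi
      · exact hf m (Finset.forall_mem_insert _ _ _ |>.2 ⟨hi, hm⟩)
      · rfl
    have X_dvd_sub : X i ∣ f - g := X_dvd_iff.2 fun m hi => by simp [coeff_g, hi]
    rw [Finset.coe_insert, Set.image_insert_eq, Ideal.span_insert, ← sub_add_cancel f g]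
    exact Submodule.add_mem_sup (Ideal.mem_span_singleton.2 X_dvd_sub) g_mem

theorem ker_killCompl_eq_span_X_image (s : Finset σ) :
    RingHom.ker (killCompl (R := R) (Function.Embedding.subtype (· ∉ (s : Set σ)))) =
      Ideal.span (X '' (s : Set σ)) := by
  apply le_antisymm
  · exact fun f hf => mem_span_X_image_of_coeff_eq_zero (mem_ker_killCompl_iff.1 hf)
  · rw [Ideal.span_le]
    rintro _ ⟨i, hi, rfl⟩
    exact killCompl_X_eq_zero (by simpa using hi)

theorem isRadical_span_X_image [IsReduced R] (s : Finset σ) :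
    (Ideal.span (X '' (s : Set σ)) : Ideal (MvPowerSeries σ R)).IsRadical := by
  rw [← ker_killCompl_eq_span_X_image]
  exact (Ideal.radical_eq_iff.1 Ideal.radical_bot_of_isReduced).comap _

theorem radical_span_X_pair [IsReduced R] (i j : σ) :
    (Ideal.span {(X i : MvPowerSeries σ R), X j}).radical = Ideal.span {X i, X j} := by
  classical
  simpa [Set.image_pair] using (isRadical_span_X_image (R := R) {i, j}).radical

theorem stmt_11_general [IsReduced R] (a b : σ →₀ ℕ) :
    (Ideal.span {monomial a (1 : R), monomial b 1}).radical =
      ⨅ i ∈ a.support, ⨅ j ∈ b.support, Ideal.span {(X i : MvPowerSeries σ R), X j} := by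
  simp only [monomial_one_eq, radical_span_finsuppProd_pair, radical_span_X_pair]

end MvPowerSeries

/-- In `R = k[[X_0, …, X_{n-1}]]` over a field `k`, for nonzero `a b : Fin n → ℕ`,
the radical of `(X^a, X^b)` is the intersection, over all pairs `(i, j)` with
`a i > 0` and `b j > 0`, of the ideals `(X_i, X_j)`. -/
theorem stmt_11 (k : Type*) [Field k] (n : ℕ) (hn : 0 < n)
    (a b : Fin n → ℕ) (ha : a ≠ 0) (hb : b ≠ 0) :
    (Ideal.span {∏ i, (MvPowerSeries.X i : MvPowerSeries (Fin n) k) ^ a i,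
        ∏ i, (MvPowerSeries.X i : MvPowerSeries (Fin n) k) ^ b i}).radical =
      ⨅ i ∈ {i : Fin n | 0 < a i}, ⨅ j ∈ {j : Fin n | 0 < b j},
        Ideal.span {(MvPowerSeries.X i : MvPowerSeries (Fin n) k),
          MvPowerSeries.X j} := by
  simpa [MvPowerSeries.monomial_one_eq, Finsupp.prod_fintype, Nat.pos_iff_ne_zero] using
    stmt_11_general (R := k) (Finsupp.equivFunOnFinite.symm a) (Finsupp.equivFunOnFinite.symm b)
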